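/- Consider the family of Fragile CPR games with n players, all with α = 1 and common loss aversion index k > 1, rate of return r and failure probability p satisfying the standing assumptions, in which player i is charged tax rate γ_i t with tax sensitivities γ_1,…,γ_n ∈ [0,1] whose mean is γ_m. Let t ∈ [0, t̄_m), where t̄_m = sup{t ≥ 0 : max_{x ∈ S_{m,t}} [f̂(x) − γ_m t v(x)] > 0}. Then, among all such games with mean sensitivity γ_m, the PNE utilization is smallest in the game Γ_M where every player has sensitivity exactly γ_m; i.e., for any heterogeneous profile (γ_1,…,γ_n) with mean γ_m, the PNE utilization x_H of the heterogeneous game satisfies x_H ≥ x_M, the PNE utilization of Γ_M. This holds for both strictly increasing and strictly decreasing r. -/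

import Mathlib

/-!
For a tax rate `τ ≥ 0` put `F_τ(x) = (r x - τ)(1 - p x) - k(1 + τ) p x = f̂(x) - τ v(x)`
(`netRate`), which is affine in `τ` and coincides with the effective rate where `r x ≥ τ`. In an
equilibrium with total `X`, necessarily `X < 1`; an active player satisfies `F_τ(X) ≥ 0` and the
first-order condition `F_τ(X) + x_i F_τ'(X) = 0`, and an inactive one has `F_τ(X) ≤ 0`.

The shape of `r` enters only through `F_τ = G - K`, where `K = k(1 + τ)` and
`G = (r - τ + K)(1 - p)` is a product of two positive concave functions, hence log-concave. Thus
increasing and decreasing `r` are treated alike. A critical point of `G` is a global maximum, so the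
assumption on `t` forces `F_m > 0` at a nonzero equilibrium total `M` of the homogeneous game;
every player is then active and `n F_m(M) + M F_m'(M) = 0`.

Suppose the heterogeneous total `H` were smaller than `M`. A player whose sensitivity is at most the
mean must be active at `H` (otherwise investing `M - H` would pay), and this yields `F_m(H) > 0` and
`F_m'(H) < 0`. Each investment `x_i` is bounded below by the tangent line at the mean tax of the
convex function `τ ↦ F_τ(H) / (-F_τ'(H))` (`tangent_bound`); summing, the linear terms cancel and
`n F_m(H) ≤ -H F_m'(H)`. Since `F_m / (-F_m') = (1 - K / G) / (-(log G)')` is nonincreasing to the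
right of `H`, this contradicts the equation at `M` (`no_crossing`).
-/

open Real Set

noncomputable section

/-- Effective rate of return of a player with sensitivity `α` and loss aversion `k`,
at utilization `x` and tax rate `t`. -/
def effRate (p r : ℝ → ℝ) (α k x t : ℝ) : ℝ :=
  if 0 ≤ r x - t then
    (r x - t) ^ α * (1 - p x) - k * (1 + t) ^ α * p x
  else
    -(k * ((t - r x) ^ α * (1 - p x) + (1 + t) ^ α * p x))

/-- Partial derivative of the effective rate of return in the utilization. -/
def effRateDx (p r : ℝ → ℝ) (α k x t : ℝ) : ℝ :=
  deriv (fun z => effRate p r α k z t) x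

/-- `g_i(x,t) = α_i f_i(x,t) / (−f_{i,x}(x,t))`. -/
def gFun (p r : ℝ → ℝ) (α k x t : ℝ) : ℝ :=
  α * effRate p r α k x t / (-effRateDx p r α k x t)

/-- Standing assumptions on the failure probability `p`. -/
structure FailureProb (p : ℝ → ℝ) : Prop where
  convexOn : ConvexOn ℝ (Ico (0:ℝ) 1) p
  strictMonoOn : StrictMonoOn p (Ico (0:ℝ) 1)
  contDiffOn : ContDiffOn ℝ 1 p (Ico (0:ℝ) 1)
  eq_one : ∀ x : ℝ, 1 ≤ x → p x = 1
  mem_unit : ∀ x : ℝ, p x ∈ Icc (0:ℝ) 1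

/-- Standing assumptions on the rate of return `r`. -/
structure RateOfReturn (r : ℝ → ℝ) : Prop where
  concaveOn : ConcaveOn ℝ (Icc (0:ℝ) 1) r
  pos : ∀ x ∈ Icc (0:ℝ) 1, 0 < r x
  strictMonoOrAnti : StrictMonoOn r (Icc (0:ℝ) 1) ∨ StrictAntiOn r (Icc (0:ℝ) 1)
  contDiffOn : ContDiffOn ℝ 1 r (Icc (0:ℝ) 1)

/-- `S_t`: the set of utilizations `x ∈ [0,1]` with `r(x) − t ≥ 0`. -/
def St (r : ℝ → ℝ) (t : ℝ) : Set ℝ := {x | x ∈ Icc (0:ℝ) 1 ∧ 0 ≤ r x - t}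

/-- The maximal tax rate `t̄` of the game. -/
def tbar {ι : Type*} [Fintype ι] (p r : ℝ → ℝ) (α k : ι → ℝ) : ℝ :=
  sSup {t : ℝ | 0 ≤ t ∧ ∃ i : ι, ∃ x ∈ Icc (0:ℝ) 1, 0 < effRate p r (α i) (k i) x t}

/-- The maximal tax rate `t̄_i` of a single player. -/
def tbarI (p r : ℝ → ℝ) (α k : ℝ) : ℝ :=
  sSup {t : ℝ | 0 ≤ t ∧ ∃ x ∈ St r t, 0 < effRate p r α k x t}

/-- `a_t` for a strictly increasing rate of return. -/
def aT (r : ℝ → ℝ) (t : ℝ) : ℝ :=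
  if t ≤ r 0 then 0 else sInf {x | x ∈ Icc (0:ℝ) 1 ∧ r x = t}

/-- The threshold `y^t_i` for a strictly decreasing rate of return. -/
def yT (p r : ℝ → ℝ) (α k t : ℝ) : ℝ :=
  if effRate p r α k 0 t ≤ 0 then 0
  else sInf {x | x ∈ St r t ∧ effRate p r α k x t = 0}

/-- `ĝ_i(x,t)`, for a strictly decreasing rate of return. -/
def gHat (p r : ℝ → ℝ) (α k x t : ℝ) : ℝ :=
  if x < yT p r α k t then gFun p r α k x t else 0

/-- The function `q_i(x,t)` for strictly increasing rate of return. -/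
def qFun (p r : ℝ → ℝ) (α x t : ℝ) : ℝ :=
  deriv r x * (1 - p x) ^ 2 /
      ((r x + 1) * deriv p x - α * deriv r x * (1 - p x) * p x) *
    ((1 + t) / (r x - t)) ^ (1 - α)

/-- `b` is a best response of a player (parameters `α`, `k`) to the others' total
investment `xbar` at tax rate `t`. -/
def IsBestResponse (p r : ℝ → ℝ) (α k t xbar b : ℝ) : Prop :=
  b ∈ Icc (0:ℝ) 1 ∧
    ∀ y ∈ Icc (0:ℝ) 1,
      y ^ α * effRate p r α k (y + xbar) t ≤ b ^ α * effRate p r α k (b + xbar) t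

/-- Pure Nash equilibrium of the Fragile CPR game at tax rate `t`. -/
def IsPNE {ι : Type*} [Fintype ι] [DecidableEq ι] (p r : ℝ → ℝ) (α k : ι → ℝ)
    (t : ℝ) (x : ι → ℝ) : Prop :=
  (∀ i, x i ∈ Icc (0:ℝ) 1) ∧
    ∀ i, ∀ y ∈ Icc (0:ℝ) 1,
      y ^ α i * effRate p r (α i) (k i) (y + ∑ j ∈ Finset.univ.erase i, x j) t ≤
        x i ^ α i * effRate p r (α i) (k i) (x i + ∑ j ∈ Finset.univ.erase i, x j) t

/-- `y` is the threshold `y^t_i` of a player, as defined in the paper for the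
increasing and decreasing cases of the rate of return. -/
def IsThresholdY (p r : ℝ → ℝ) (α k t y : ℝ) : Prop :=
  (StrictMonoOn r (Icc (0:ℝ) 1) →
    ((∀ x ∈ St r t, effRate p r α k x t ≤ 0) → y = 0) ∧
    ((∃ x ∈ St r t, 0 < effRate p r α k x t) →
      ∃ z ∈ St r t, IsMaxOn (fun x => effRate p r α k x t) (St r t) z ∧
        y ∈ Ioo z 1 ∧ effRate p r α k y t = 0)) ∧
  (StrictAntiOn r (Icc (0:ℝ) 1) →
    ((effRate p r α k 0 t ≤ 0) → y = 0) ∧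
    ((0 < effRate p r α k 0 t) → y ∈ St r t ∧ effRate p r α k y t = 0))

/-- Pure Nash equilibrium under player-specific tax sensitivities `γ_i`
(all players have `α = 1` and common loss aversion `k`). -/
def IsPNEgamma {ι : Type*} [Fintype ι] [DecidableEq ι] (p r : ℝ → ℝ) (k t : ℝ)
    (γ : ι → ℝ) (x : ι → ℝ) : Prop :=
  (∀ i, x i ∈ Icc (0:ℝ) 1) ∧
    ∀ i, ∀ y ∈ Icc (0:ℝ) 1,
      y * effRate p r 1 k (y + ∑ j ∈ Finset.univ.erase i, x j) (γ i * t) ≤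
        x i * effRate p r 1 k (x i + ∑ j ∈ Finset.univ.erase i, x j) (γ i * t)

/-- The net rate of return `f̂(x) - τ v(x)`: the branch of `effRate` (with `α = 1`) valid for
`τ ≤ r x`, extended by the same formula to all `x`. -/
def netRate (p r : ℝ → ℝ) (k τ x : ℝ) : ℝ :=
  (r x - τ) * (1 - p x) - k * (1 + τ) * p x

/-- The derivative of `netRate` in `x`, at points where `p` and `r` are differentiable. -/
def netRateDx (p r : ℝ → ℝ) (k τ x : ℝ) : ℝ :=
  deriv r x * (1 - p x) - (r x - τ + k * (1 + τ)) * deriv p x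

/-! ### The failure probability and the rate of return -/

lemma FailureProb.lt_one {p : ℝ → ℝ} (hp : FailureProb p) {x : ℝ} (hx : x ∈ Ico (0:ℝ) 1) :
    p x < 1 := by
  have h1 : (x + 1) / 2 ∈ Ico (0:ℝ) 1 := ⟨by linarith [hx.1], by linarith [hx.2]⟩
  have h2 := hp.strictMonoOn hx h1 (by linarith [hx.2])
  linarith [(hp.mem_unit ((x + 1) / 2)).2]

lemma FailureProb.pos {p : ℝ → ℝ} (hp : FailureProb p) {x : ℝ} (hx : x ∈ Ioo (0:ℝ) 1) :
    0 < p x := by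
  have h2 := hp.strictMonoOn (⟨le_rfl, one_pos⟩ : (0:ℝ) ∈ Ico (0:ℝ) 1) ⟨hx.1.le, hx.2⟩ hx.1
  linarith [(hp.mem_unit 0).1]

lemma FailureProb.hasDerivAt {p : ℝ → ℝ} (hp : FailureProb p) {x : ℝ} (hx : x ∈ Ioo (0:ℝ) 1) :
    HasDerivAt p (deriv p x) x :=
  ((hp.contDiffOn.differentiableOn one_ne_zero).differentiableAt
    (Ico_mem_nhds hx.1 hx.2)).hasDerivAt

lemma RateOfReturn.hasDerivAt {r : ℝ → ℝ} (hr : RateOfReturn r) {x : ℝ} (hx : x ∈ Ioo (0:ℝ) 1) :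
    HasDerivAt r (deriv r x) x :=
  ((hr.contDiffOn.differentiableOn one_ne_zero).differentiableAt
    (Icc_mem_nhds hx.1 hx.2)).hasDerivAt

lemma ConvexOn.tangent_le {S : Set ℝ} {f : ℝ → ℝ} {f' x y : ℝ} (hf : ConvexOn ℝ S f)
    (hx : x ∈ S) (hy : y ∈ S) (hd : HasDerivAt f f' x) : f x + f' * (y - x) ≤ f y := by
  rcases lt_trichotomy x y with h | h | h
  · have := hf.le_slope_of_hasDerivAt hx hy h hd
    rw [slope_def_field, le_div_iff₀ (by linarith)] at this
    linarith
  · subst h; simp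
  · have := hf.slope_le_of_hasDerivAt hy hx h hd
    rw [slope_def_field, div_le_iff₀ (by linarith)] at this
    linarith

lemma FailureProb.tangent_le {p : ℝ → ℝ} (hp : FailureProb p) {x y : ℝ} (hx : x ∈ Ioo (0:ℝ) 1)
    (hy : y ∈ Ico (0:ℝ) 1) : p x + deriv p x * (y - x) ≤ p y :=
  hp.convexOn.tangent_le ⟨hx.1.le, hx.2⟩ hy (hp.hasDerivAt hx)

lemma RateOfReturn.le_tangent {r : ℝ → ℝ} (hr : RateOfReturn r) {x y : ℝ}
    (hx : x ∈ Ioo (0:ℝ) 1) (hy : y ∈ Ico (0:ℝ) 1) : r y ≤ r x + deriv r x * (y - x) := by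
  have := hr.concaveOn.neg.tangent_le (Ioo_subset_Icc_self hx) (Ico_subset_Icc_self hy)
    (hr.hasDerivAt hx).neg
  simp only [Pi.neg_apply] at this
  linarith

lemma FailureProb.deriv_nonneg {p : ℝ → ℝ} (hp : FailureProb p) {x : ℝ}
    (hx : x ∈ Ioo (0:ℝ) 1) : 0 ≤ deriv p x := by
  have h0 : (0:ℝ) ∈ Ico (0:ℝ) 1 := ⟨le_rfl, one_pos⟩
  have h1 := hp.tangent_le hx h0
  have h2 := hp.strictMonoOn h0 ⟨hx.1.le, hx.2⟩ hx.1
  have hx0 := hx.1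
  nlinarith

/-! ### Effective and net rates -/

lemma effRate_eq {p r : ℝ → ℝ} {k x τ : ℝ} (h : τ ≤ r x) :
    effRate p r 1 k x τ = netRate p r k τ x := by
  simp [effRate, netRate, h]

lemma effRate_neg {p r : ℝ → ℝ} (hp : FailureProb p) {k x τ : ℝ} (hk : 1 < k) (hτ : 0 ≤ τ)
    (h : r x < τ) : effRate p r 1 k x τ < 0 := by
  have h1 : ¬ 0 ≤ r x - τ := by linarith
  obtain ⟨h2, h3⟩ := hp.mem_unit x
  simp only [effRate, h1, if_false, rpow_one]
  have h4 : 0 < (τ - r x) * (1 - p x) + (1 + τ) * p x := by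
    rcases h3.lt_or_eq with h3 | h3
    · have := mul_pos (sub_pos.2 h) (sub_pos.2 h3)
      have : 0 ≤ (1 + τ) * p x := mul_nonneg (by linarith) h2
      linarith
    · rw [h3]; linarith
  have : 0 < k := by linarith
  have := mul_pos this h4
  linarith

lemma effRate_neg_of_one_le {p r : ℝ → ℝ} (hp : FailureProb p) {k x τ : ℝ} (hk : 1 < k)
    (hτ : 0 ≤ τ) (hx : 1 ≤ x) : effRate p r 1 k x τ < 0 := by
  have : 0 < k * (1 + τ) := mul_pos (by linarith) (by linarith)
  rcases lt_or_ge (r x) τ with h | h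
  · exact effRate_neg hp hk hτ h
  · rw [effRate_eq h, netRate, hp.eq_one x hx]; linarith

lemma effRate_eq_of_netRate_pos {p r : ℝ → ℝ} (hp : FailureProb p) {k x τ : ℝ} (hk : 1 < k)
    (hτ : 0 ≤ τ) (h : 0 < netRate p r k τ x) : effRate p r 1 k x τ = netRate p r k τ x := by
  apply effRate_eq
  by_contra! hc
  obtain ⟨h2, h3⟩ := hp.mem_unit x
  have h4 : 0 ≤ k * (1 + τ) * p x := mul_nonneg (mul_nonneg (by linarith) (by linarith)) h2
  have h5 : 0 ≤ (τ - r x) * (1 - p x) := mul_nonneg (by linarith) (by linarith)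
  unfold netRate at h
  linarith

lemma netRate_eq_of_effRate_nonneg {p r : ℝ → ℝ} (hp : FailureProb p) {k x τ : ℝ} (hk : 1 < k)
    (hτ : 0 ≤ τ) (h : 0 ≤ effRate p r 1 k x τ) : effRate p r 1 k x τ = netRate p r k τ x := by
  apply effRate_eq
  by_contra! hc
  linarith [effRate_neg hp hk hτ hc]

lemma netRate_shift (p r : ℝ → ℝ) (k τ σ x : ℝ) :
    netRate p r k τ x = netRate p r k σ x - (1 + (k - 1) * p x) * (τ - σ) := by
  unfold netRate; ring

lemma netRateDx_shift (p r : ℝ → ℝ) (k τ σ x : ℝ) :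
    netRateDx p r k τ x = netRateDx p r k σ x - (k - 1) * deriv p x * (τ - σ) := by
  unfold netRateDx; ring

lemma hasDerivAt_netRate {p r : ℝ → ℝ} (hp : FailureProb p) (hr : RateOfReturn r) (k τ : ℝ)
    {x : ℝ} (hx : x ∈ Ioo (0:ℝ) 1) :
    HasDerivAt (netRate p r k τ) (netRateDx p r k τ x) x := by
  have h := (((hr.hasDerivAt hx).sub_const τ).mul ((hp.hasDerivAt hx).const_sub 1)).sub
    ((hp.hasDerivAt hx).const_mul (k * (1 + τ)))
  refine h.congr_deriv ?_
  unfold netRateDx; ring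

/-- If two positive numbers `W`, `Q` are bounded by `w + a`, `q + b` and the first-order change
`a q + w b` of the product is nonpositive, then so is the actual change, by the inequality of
arithmetic and geometric means. -/
lemma prod_le_of_tangent {w q W Q a b : ℝ} (hw : 0 < w) (hq : 0 < q) (hW : 0 < W) (hQ : 0 < Q)
    (h1 : W ≤ w + a) (h2 : Q ≤ q + b) (h : a * q + w * b ≤ 0) : W * Q ≤ w * q := by
  have hg : 0 < w * q := mul_pos hw hq
  have hu : 0 < w * q + a * q := by nlinarith
  have hv : 0 < w * q + w * b := by nlinarith
  have h3 : (w * q + a * q) * (w * q + w * b) ≤ (w * q) * (w * q) := by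
    nlinarith [sq_nonneg (a * q - w * b)]
  have h4 : (w * q) * ((w + a) * (q + b)) ≤ (w * q) * (w * q) := by linarith
  exact (mul_le_mul h1 h2 hQ.le (by linarith)).trans (le_of_mul_le_mul_left h4 hg)

/-- The net rate plus `k (1 + τ)` is a product of two positive concave functions, hence
log-concave: if it does not increase to first order at `x` in the direction of `z`, then its value
at `z` is at most its value at `x`. In particular a critical point is a global maximum. -/
lemma netRate_le_of_slope {p r : ℝ → ℝ} (hp : FailureProb p) (hr : RateOfReturn r) {k τ x z : ℝ}
    (hk : 1 < k) (hτ : 0 ≤ τ) (hx : x ∈ Ioo (0:ℝ) 1) (hz : z ∈ Ico (0:ℝ) 1)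
    (h : netRateDx p r k τ x * (z - x) ≤ 0) : netRate p r k τ z ≤ netRate p r k τ x := by
  have hw : ∀ y ∈ Ico (0:ℝ) 1, 0 < r y - τ + k * (1 + τ) := fun y hy => by
    have := hr.pos y (Ico_subset_Icc_self hy)
    nlinarith
  have hx' : x ∈ Ico (0:ℝ) 1 := ⟨hx.1.le, hx.2⟩
  have w1 := hw x hx'
  have w2 := hw z hz
  have q1 := sub_pos.2 (hp.lt_one hx')
  have q2 := sub_pos.2 (hp.lt_one hz)
  have tr := hr.le_tangent hx hz
  have tp := hp.tangent_le hx hz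
  unfold netRateDx at h
  suffices hs : (r z - τ + k * (1 + τ)) * (1 - p z) ≤ (r x - τ + k * (1 + τ)) * (1 - p x) by
    unfold netRate; linarith
  exact prod_le_of_tangent w1 q1 w2 q2 (by linarith : _ ≤ _ + deriv r x * (z - x))
    (by linarith : _ ≤ _ + -(deriv p x * (z - x))) (by linarith)

/-! ### Necessary conditions for a best response -/

/-- An active best response at a total below `1` satisfies the first-order condition. -/
lemma active_foc {p r : ℝ → ℝ} (hp : FailureProb p) (hr : RateOfReturn r) {k τ b c : ℝ}
    (hk : 1 < k) (hτ : 0 ≤ τ) (hb : 0 < b) (hc : 0 ≤ c) (hbc : b + c < 1)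
    (hbr : ∀ y ∈ Icc (0:ℝ) 1, y * effRate p r 1 k (y + c) τ ≤ b * effRate p r 1 k (b + c) τ) :
    0 ≤ netRate p r k τ (b + c) ∧
      netRate p r k τ (b + c) + b * netRateDx p r k τ (b + c) = 0 := by
  have hX : b + c ∈ Ioo (0:ℝ) 1 := ⟨by linarith, hbc⟩
  have h0 : 0 ≤ effRate p r 1 k (b + c) τ := by
    have := hbr 0 ⟨le_rfl, zero_le_one⟩
    rw [zero_mul] at this
    exact nonneg_of_mul_nonneg_right this hb
  have heq := netRate_eq_of_effRate_nonneg hp hk hτ h0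
  refine ⟨heq ▸ h0, ?_⟩
  -- At `r X = τ` the net rate would be `-k (1 + τ) p X < 0`, because `X > 0`.
  have hrX : τ < r (b + c) := by
    by_contra! hcon
    have h1 : (r (b + c) - τ) * (1 - p (b + c)) ≤ 0 :=
      mul_nonpos_of_nonpos_of_nonneg (by linarith) (by linarith [(hp.mem_unit (b + c)).2])
    have h2 : 0 < k * (1 + τ) * p (b + c) :=
      mul_pos (mul_pos (by linarith) (by linarith)) (hp.pos hX)
    rw [heq, netRate] at h0
    linarith
  have hev : ∀ᶠ y in nhds b, τ < r (y + c) := by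
    have hcont : ContinuousAt (fun y => r (y + c)) b :=
      ContinuousAt.comp (f := fun y => y + c) (hr.hasDerivAt hX).continuousAt (by fun_prop)
    exact hcont.eventually (lt_mem_nhds hrX)
  have hmax : IsLocalMax (fun y => y * netRate p r k τ (y + c)) b := by
    filter_upwards [hev, Icc_mem_nhds hb (by linarith : b < 1)] with y hy hy1
    have := hbr y hy1
    rwa [effRate_eq hy.le, heq] at this
  have hd := (hasDerivAt_id b).mul ((hasDerivAt_netRate hp hr k τ hX).comp_add_const b c)
  have := hmax.hasDerivAt_eq_zero hd
  simpa using this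

/-- A player for whom zero is a best response faces a nonpositive net rate at the current total. -/
lemma inactive_nonpos {p r : ℝ → ℝ} (hp : FailureProb p) (hr : RateOfReturn r) {k τ X : ℝ}
    (hk : 1 < k) (hτ : 0 ≤ τ) (hX : X ∈ Ioo (0:ℝ) 1)
    (hbr : ∀ y ∈ Icc (0:ℝ) 1, y * effRate p r 1 k (y + X) τ ≤ 0) :
    netRate p r k τ X ≤ 0 := by
  by_contra! hcon
  have hev : ∀ᶠ y in nhds (0:ℝ), 0 < netRate p r k τ (y + X) := by
    have hcont : ContinuousAt (fun y => netRate p r k τ (y + X)) 0 :=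
      ContinuousAt.comp_of_eq (f := fun y => y + X)
        (hasDerivAt_netRate hp hr k τ hX).continuousAt (by fun_prop) (zero_add X)
    exact hcont.eventually (lt_mem_nhds (by simpa using hcon))
  have hev' := (hev.filter_mono nhdsWithin_le_nhds).and
    (Ioo_mem_nhdsGT (zero_lt_one (α := ℝ)))
  obtain ⟨y, hy, hy0, hy1⟩ := hev'.exists
  have := hbr y ⟨hy0.le, hy1.le⟩
  rw [effRate_eq_of_netRate_pos hp hk hτ hy] at this
  linarith [mul_pos hy0 hy]

section Equilibrium

variable {ι : Type*} [Fintype ι] [DecidableEq ι] {p r : ℝ → ℝ} {k t : ℝ} {γ x : ι → ℝ}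

lemma IsPNEgamma.total_nonneg (h : IsPNEgamma p r k t γ x) : 0 ≤ ∑ i, x i :=
  Finset.sum_nonneg fun i _ => (h.1 i).1

lemma IsPNEgamma.total_lt_one (hp : FailureProb p) (hk : 1 < k) (ht : 0 ≤ t)
    (hγ : ∀ i, 0 ≤ γ i) (h : IsPNEgamma p r k t γ x) : ∑ i, x i < 1 := by
  by_contra! hc
  obtain ⟨i, -, hi⟩ := Finset.exists_lt_of_sum_lt
    (show ∑ _i : ι, (0:ℝ) < ∑ i, x i by simp; linarith)
  have h1 := h.2 i 0 ⟨le_rfl, zero_le_one⟩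
  rw [Finset.add_sum_erase _ _ (Finset.mem_univ i)] at h1
  have h2 := effRate_neg_of_one_le (r := r) hp hk (mul_nonneg (hγ i) ht) hc
  nlinarith

lemma IsPNEgamma.foc (hp : FailureProb p) (hr : RateOfReturn r) (hk : 1 < k) (ht : 0 ≤ t)
    (hγ : ∀ i, 0 ≤ γ i) (h : IsPNEgamma p r k t γ x) {i : ι} (hi : 0 < x i) :
    0 ≤ netRate p r k (γ i * t) (∑ j, x j) ∧
      netRate p r k (γ i * t) (∑ j, x j) + x i * netRateDx p r k (γ i * t) (∑ j, x j) = 0 := by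
  have hs := Finset.add_sum_erase _ x (Finset.mem_univ i)
  have := active_foc hp hr hk (mul_nonneg (hγ i) ht) hi
    (Finset.sum_nonneg fun j _ => (h.1 j).1) (by rw [hs]; exact h.total_lt_one hp hk ht hγ) (h.2 i)
  rwa [hs] at this

lemma IsPNEgamma.inactive (h : IsPNEgamma p r k t γ x) {i : ι} (hi : x i = 0) :
    ∀ y ∈ Icc (0:ℝ) 1, y * effRate p r 1 k (y + ∑ j, x j) (γ i * t) ≤ 0 := by
  intro y hy
  have h1 := h.2 i y hy
  have hs := Finset.add_sum_erase _ x (Finset.mem_univ i)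
  rw [hi, zero_add] at hs
  rwa [hi, zero_mul, hs] at h1

end Equilibrium

/-! ### The two inequalities behind the comparison -/

/-- The tangent line at `δ = 0` of the convex function `δ ↦ (A - b δ) / (B + c δ)` bounds from
below the investment `x` of a player whose tax deviates by `δ` from the mean; the inequality is
stated after multiplication by `B ^ 2`. -/
lemma tangent_bound {A B b c δ x : ℝ} (hA : 0 < A) (hB : 0 < B) (hb : 0 < b) (hc : 0 ≤ c)
    (hx : 0 ≤ x) (hact : 0 < x → 0 ≤ A - b * δ ∧ A - b * δ - x * (B + c * δ) = 0)
    (hinact : x = 0 → A - b * δ ≤ 0) : A * B - δ * (b * B + A * c) ≤ x * B ^ 2 := by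
  rcases hx.eq_or_lt with h | h
  · have h1 := hinact h.symm
    have hδ : 0 < δ := by
      by_contra! hn
      nlinarith
    rw [← h]
    have := mul_nonneg hA.le (mul_nonneg hc hδ.le)
    nlinarith
  · obtain ⟨h1, h2⟩ := hact h
    have hpos : 0 < B + c * δ := by
      by_contra! hn
      have hδ : δ ≤ 0 := by nlinarith
      nlinarith
    refine le_of_mul_le_mul_left ?_ hpos
    have h3 : 0 ≤ c * δ ^ 2 * (b * B + A * c) := by positivity
    have h4 : x * (B + c * δ) = A - b * δ := by linarith
    calc (B + c * δ) * (A * B - δ * (b * B + A * c))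
        = (A - b * δ) * B ^ 2 - c * δ ^ 2 * (b * B + A * c) := by ring
      _ ≤ (A - b * δ) * B ^ 2 := by linarith
      _ = (B + c * δ) * (x * B ^ 2) := by rw [← h4]; ring

/-- For a positive concave function the logarithmic derivative is nonincreasing. The hypotheses are
the two tangent inequalities between points at distance `D`, with values `u` (left) and `v` (right)
and slopes `u'` and `v'`. -/
lemma log_slope_anti {u v u' v' D : ℝ} (hu : 0 < u) (hv : 0 < v) (hD : 0 < D)
    (h1 : v ≤ u + u' * D) (h2 : u ≤ v - v' * D) : v' * u ≤ u' * v := by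
  have h3 : (v - u) * v ≤ u' * D * v := mul_le_mul_of_nonneg_right (by linarith) hv.le
  have h4 : v' * D * u ≤ (v - u) * u := mul_le_mul_of_nonneg_right (by linarith) hu.le
  nlinarith [sq_nonneg (v - u)]

/-- The equilibrium equation `n F(M) + M F'(M) = 0` of the homogeneous game cannot hold with
`F(M) > 0` if `n F(H) + H F'(H) ≤ 0` at a smaller total `H` with `F(H) ≥ F(M)`. -/
lemma no_crossing {p r : ℝ → ℝ} (hp : FailureProb p) (hr : RateOfReturn r) {k τ H M n : ℝ}
    (hk : 1 < k) (hτ : 0 ≤ τ) (hn : 0 < n) (hH : H ∈ Ioo (0:ℝ) 1) (hM : M ∈ Ioo (0:ℝ) 1)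
    (hHM : H < M) (hFM : 0 < netRate p r k τ M)
    (hle : netRate p r k τ M ≤ netRate p r k τ H)
    (heq : n * netRate p r k τ M + M * netRateDx p r k τ M = 0)
    (hineq : n * netRate p r k τ H ≤ -(H * netRateDx p r k τ H)) : False := by
  have hH' : H ∈ Ico (0:ℝ) 1 := ⟨hH.1.le, hH.2⟩
  have hM' : M ∈ Ico (0:ℝ) 1 := ⟨hM.1.le, hM.2⟩
  have hw : ∀ y ∈ Ico (0:ℝ) 1, 0 < r y - τ + k * (1 + τ) := fun y hy => by
    have := hr.pos y (Ico_subset_Icc_self hy)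
    nlinarith
  have w1 := hw H hH'
  have w2 := hw M hM'
  have q1 := sub_pos.2 (hp.lt_one hH')
  have q2 := sub_pos.2 (hp.lt_one hM')
  have hr' := log_slope_anti w1 w2 (sub_pos.2 hHM) (u' := deriv r H) (v' := deriv r M)
    (by linarith [hr.le_tangent hH hM']) (by linarith [hr.le_tangent hM hH'])
  have hp' := log_slope_anti q1 q2 (sub_pos.2 hHM) (u' := -deriv p H) (v' := -deriv p M)
    (by linarith [hp.tangent_le hH hM']) (by linarith [hp.tangent_le hM hH'])
  have hK : 0 < k * (1 + τ) := mul_pos (by linarith) (by linarith)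
  set K := k * (1 + τ) with hKdef
  have eG : ∀ y, (r y - τ + K) * (1 - p y) = netRate p r k τ y + K := fun y => by
    unfold netRate; ring
  have eD : ∀ y, netRateDx p r k τ y =
      deriv r y * (1 - p y) - (r y - τ + K) * deriv p y := fun y => rfl
  -- The logarithmic derivative of `G = netRate + K` is nonincreasing, cleared of denominators.
  have hlog : netRateDx p r k τ M * (netRate p r k τ H + K) ≤
      netRateDx p r k τ H * (netRate p r k τ M + K) := by
    rw [← eG, ← eG, eD, eD]
    have a1 := mul_le_mul_of_nonneg_right hr' (mul_pos q1 q2).le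
    have a2 := mul_le_mul_of_nonneg_right hp' (mul_pos w1 w2).le
    nlinarith
  generalize netRateDx p r k τ M = D2 at *
  generalize netRateDx p r k τ H = D1 at *
  generalize netRate p r k τ M = F2 at *
  generalize netRate p r k τ H = F1 at *
  have hD2 : D2 < 0 := by
    have := mul_pos hn hFM
    by_contra! hc
    have := mul_nonneg hM.1.le hc
    linarith
  have c1 : (n * F1) * (F2 + K) ≤ -(H * D1) * (F2 + K) :=
    mul_le_mul_of_nonneg_right hineq (by linarith)
  have c2 : H * (D2 * (F1 + K)) ≤ H * (D1 * (F2 + K)) := mul_le_mul_of_nonneg_left hlog hH.1.le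
  have c3 : n * F2 * (F1 + K) ≤ n * F1 * (F2 + K) := by
    have := mul_nonneg (mul_pos hn hK).le (sub_nonneg.2 hle)
    nlinarith
  have c4 : n * F2 * (F1 + K) = -(M * D2) * (F1 + K) := by rw [show n * F2 = -(M * D2) by linarith]
  have c5 : 0 < (M - H) * (-D2) * (F1 + K) :=
    mul_pos (mul_pos (sub_pos.2 hHM) (by linarith)) (by linarith)
  nlinarith

/-- with `α = 1` and common loss aversion `k > 1`, among all
assignments of tax sensitivities `γ_i ∈ [0,1]` with mean `γ_m`, the PNE
utilization is smallest when every player has sensitivity exactly `γ_m`: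
the heterogeneous PNE utilization `x_H` satisfies `x_H ≥ x_M`. -/
theorem statement19 {ι : Type*} [Fintype ι] [DecidableEq ι] [Nonempty ι]
    (p r : ℝ → ℝ)
    (hp : FailureProb p) (hr : RateOfReturn r)
    (k : ℝ) (hk : 1 < k)
    (γ : ι → ℝ) (hγ : ∀ i, γ i ∈ Icc (0:ℝ) 1)
    (γm : ℝ) (hγm : γm = (∑ i, γ i) / (Fintype.card ι : ℝ))
    (t : ℝ) (ht : 0 ≤ t)
    (ht' : t < sSup {s : ℝ | 0 ≤ s ∧
      ∃ x ∈ St r (γm * s), 0 < effRate p r 1 k x (γm * s)})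
    (xH xM : ι → ℝ)
    (hH : IsPNEgamma p r k t γ xH)
    (hM : IsPNEgamma p r k t (fun _ => γm) xM) :
    ∑ i, xM i ≤ ∑ i, xH i := by
  have hn : (0:ℝ) < Fintype.card ι := by exact_mod_cast Fintype.card_pos
  have hsum : ∑ i, γ i = Fintype.card ι * γm := by rw [hγm]; field_simp
  have hγ0 : ∀ i, 0 ≤ γ i := fun i => (hγ i).1
  have hm0 : 0 ≤ γm := by
    rw [hγm]; exact div_nonneg (Finset.sum_nonneg fun i _ => hγ0 i) hn.le
  have hτ : 0 ≤ γm * t := mul_nonneg hm0 ht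
  by_contra! hHM
  have hH0 := hH.total_nonneg
  have hH1 := hH.total_lt_one hp hk ht hγ0
  have hM1 := hM.total_lt_one hp hk ht (fun _ => hm0)
  have focH := fun i => hH.foc hp hr hk ht hγ0 (i := i)
  have focM := fun i => hM.foc hp hr hk ht (fun _ => hm0) (i := i)
  have inH := fun i => hH.inactive (i := i)
  have inM := fun i => hM.inactive (i := i)
  generalize hMdef : ∑ i, xM i = M at *
  generalize hHdef : ∑ i, xH i = H at *
  have hMI : M ∈ Ioo (0:ℝ) 1 := ⟨by linarith, hM1⟩
  -- The bound on `t` provides a utilization with positive mean net rate.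
  obtain ⟨z, hz, hzpos⟩ : ∃ z ∈ Ico (0:ℝ) 1, 0 < netRate p r k (γm * t) z := by
    have hne : {s : ℝ | 0 ≤ s ∧
        ∃ x ∈ St r (γm * s), 0 < effRate p r 1 k x (γm * s)}.Nonempty := by
      by_contra hc
      rw [Set.not_nonempty_iff_eq_empty] at hc
      rw [hc, Real.sSup_empty] at ht'
      linarith
    obtain ⟨s, ⟨hs0, z, hz, hzpos⟩, hts⟩ := exists_lt_of_lt_csSup hne ht'
    have hτs : 0 ≤ γm * s := mul_nonneg hm0 hs0
    refine ⟨z, ⟨hz.1.1, ?_⟩, ?_⟩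
    · by_contra! hc
      linarith [effRate_neg_of_one_le (r := r) hp hk hτs hc]
    · rw [netRate_eq_of_effRate_nonneg hp hk hτs hzpos.le,
        netRate_shift p r k (γm * s) (γm * t)] at hzpos
      have h1 : 0 ≤ γm * s - γm * t := by nlinarith
      have h2 : 0 ≤ (k - 1) * p z := mul_nonneg (by linarith) (hp.mem_unit z).1
      have h3 := mul_nonneg (by linarith : 0 ≤ 1 + (k - 1) * p z) h1
      linarith
  -- A vanishing net rate at `M` would make `M` a critical point, hence a global maximum.
  have hFM : 0 < netRate p r k (γm * t) M := by
    obtain ⟨i, -, hi⟩ := Finset.exists_lt_of_sum_lt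
      (show ∑ _i : ι, (0:ℝ) < ∑ i, xM i by rw [hMdef]; simpa using hMI.1)
    obtain ⟨h1, h2⟩ := focM i hi
    rcases h1.lt_or_eq with h1 | h1
    · exact h1
    · rw [← h1, zero_add] at h2
      have h3 := (mul_eq_zero.1 h2).resolve_left hi.ne'
      have := netRate_le_of_slope hp hr hk hτ hMI hz (by rw [h3, zero_mul])
      linarith
  have heqM : Fintype.card ι * netRate p r k (γm * t) M +
      M * netRateDx p r k (γm * t) M = 0 := by
    have hall : ∀ i, netRate p r k (γm * t) M + xM i * netRateDx p r k (γm * t) M = 0 := by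
      intro i
      rcases (hM.1 i).1.lt_or_eq with h | h
      · exact (focM i h).2
      · linarith [inactive_nonpos hp hr hk hτ hMI (inM i h.symm)]
    have := Finset.sum_eq_zero (s := Finset.univ) fun i _ => hall i
    rw [Finset.sum_add_distrib, ← Finset.sum_mul, hMdef] at this
    simpa using this
  -- A player taxed at most at the mean rate is active at `H`: investing `M - H` would pay.
  obtain ⟨i, -, hi⟩ := Finset.exists_le_of_sum_le (s := Finset.univ) (f := γ)
    (g := fun _ => γm) Finset.univ_nonempty (by simp [hsum])
  have hτi : γ i * t ≤ γm * t := mul_le_mul_of_nonneg_right hi ht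
  have hv : ∀ y, 0 < 1 + (k - 1) * p y := fun y => by
    have : 0 ≤ (k - 1) * p y := mul_nonneg (by linarith) (hp.mem_unit y).1
    linarith
  have hxi : 0 < xH i := by
    refine (hH.1 i).1.lt_of_ne' fun h0 => ?_
    have h1 := inH i h0 (M - H) ⟨by linarith, by linarith⟩
    rw [sub_add_cancel] at h1
    have h2 : 0 < netRate p r k (γ i * t) M := by
      rw [netRate_shift p r k (γ i * t) (γm * t)]
      nlinarith [hv M]
    rw [effRate_eq_of_netRate_pos hp hk (mul_nonneg (hγ0 i) ht) h2] at h1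
    linarith [mul_pos (sub_pos.2 hHM) h2]
  have hHI : H ∈ Ioo (0:ℝ) 1 :=
    ⟨hHdef ▸ hxi.trans_le (Finset.single_le_sum (fun j _ => (hH.1 j).1) (Finset.mem_univ i)), hH1⟩
  have hc : 0 ≤ (k - 1) * deriv p H := mul_nonneg (by linarith) (hp.deriv_nonneg hHI)
  obtain ⟨hi1, hi2⟩ := focH i hxi
  have hDmi : netRateDx p r k (γm * t) H ≤ netRateDx p r k (γ i * t) H := by
    rw [netRateDx_shift p r k (γm * t) (γ i * t)]
    have := mul_nonneg hc (sub_nonneg.2 hτi)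
    linarith
  have hDm : netRateDx p r k (γm * t) H ≤ 0 := by
    have : netRateDx p r k (γ i * t) H ≤ 0 := by
      by_contra! hcon
      linarith [mul_pos hxi hcon]
    linarith
  have hle : netRate p r k (γm * t) M ≤ netRate p r k (γm * t) H :=
    netRate_le_of_slope hp hr hk hτ hHI ⟨hMI.1.le, hMI.2⟩
      (mul_nonpos_of_nonpos_of_nonneg hDm (by linarith))
  have hFH : 0 < netRate p r k (γm * t) H := hFM.trans_le hle
  have hDm' : netRateDx p r k (γm * t) H < 0 := by
    have h1 : 0 < netRate p r k (γ i * t) H := by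
      rw [netRate_shift p r k (γ i * t) (γm * t)]
      nlinarith [hv H]
    have : netRateDx p r k (γ i * t) H < 0 := by
      by_contra! hcon
      linarith [mul_nonneg hxi.le hcon]
    linarith
  refine no_crossing hp hr hk hτ hn hHI hMI hHM hFM hle heqM ?_
  have hbound : ∀ j, netRate p r k (γm * t) H * -netRateDx p r k (γm * t) H -
      (γ j * t - γm * t) * ((1 + (k - 1) * p H) * -netRateDx p r k (γm * t) H +
        netRate p r k (γm * t) H * ((k - 1) * deriv p H)) ≤
      xH j * (-netRateDx p r k (γm * t) H) ^ 2 := by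
    intro j
    refine tangent_bound hFH (by linarith) (hv H) hc (hH.1 j).1 (fun hj => ?_) (fun hj => ?_)
    · obtain ⟨h1, h2⟩ := focH j hj
      rw [netRate_shift p r k (γ j * t) (γm * t)] at h1 h2
      rw [netRateDx_shift p r k (γ j * t) (γm * t)] at h2
      exact ⟨h1, by linarith⟩
    · rw [← netRate_shift]
      exact inactive_nonpos hp hr hk (mul_nonneg (hγ0 j) ht) hHI (inH j hj)
  have hs := Finset.sum_le_sum fun j (_ : j ∈ Finset.univ) => hbound j
  have hdev : ∑ j, (γ j * t - γm * t) = 0 := by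
    rw [Finset.sum_sub_distrib, ← Finset.sum_mul, hsum]; simp; ring
  rw [Finset.sum_sub_distrib, ← Finset.sum_mul, ← Finset.sum_mul, ← Finset.sum_mul, hdev,
    hHdef] at hs
  simp only [Finset.sum_const, Finset.card_univ, nsmul_eq_mul, zero_mul, sub_zero] at hs
  refine le_of_mul_le_mul_right ?_ (neg_pos.2 hDm')
  linarith
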